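/- arXiv:2605.25513 — 2 statements merged into one kernel-verified Lean document; each statement's English description precedes it below -/
import Mathlib

section
/- For every dimension n ≥ 1, every multi-index α ∈ ℕ^n and every ℓ ∈ ℕ with (α, ℓ) ≠ (0, 0), there exist constants c > 0 and t₀ > 0 such that for every 0 < t ≤ t₀ there exists m ∈ ℤ^n with (2π)^{|α|} · (4π²‖m‖²)^ℓ · |m^α| · exp(−4π²‖m‖² t) ≥ c · t^{−(ℓ + |α|/2)}. (One may take m = (k_t, …, k_t) with k_t = ⌊1/√(8π² n t)⌋; this is the sharpness statement of Theorem 1.1(ii): the small-time power t^{−ℓ−|α|/2} cannot be improved.) -/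
/-!
Take `m = (k, …, k)` with `k = ⌊s⌋` and `s = t^{-1/2} ≥ 1`, so that `s / 2 ≤ k ≤ s`. The upper bound
gives `k² t ≤ 1`, which keeps the exponential above `exp (-4π²n)`; the lower bound makes the
polynomial factor, which is at least `k ^ (2ℓ + |α|)`, at least `(s / 2) ^ (2ℓ + |α|)`, and
`s ^ (2ℓ + |α|)` is exactly `t ^ (-(ℓ + |α| / 2))`.
-/

open Real

/-- Theorem 1.1(ii) (symbol form): sharpness of the small-time power
`t^{-(ℓ + |α|/2)}` for the heat multiplier symbol of `δ^α L^ℓ P_t`. -/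
theorem stmt_1 (n : ℕ) (hn : 1 ≤ n) (α : Fin n → ℕ) (ℓ : ℕ)
    (hαℓ : ¬(α = 0 ∧ ℓ = 0)) :
    ∃ c > 0, ∃ t₀ > 0, ∀ t : ℝ, 0 < t → t ≤ t₀ →
      ∃ m : Fin n → ℤ,
        (2 * π) ^ (∑ i, α i) * (4 * π ^ 2 * ∑ i, ((m i : ℝ)) ^ 2) ^ ℓ *
            |∏ i, ((m i : ℝ)) ^ (α i)| *
            Real.exp (-(4 * π ^ 2 * ∑ i, ((m i : ℝ)) ^ 2) * t)
          ≥ c * t ^ (-((ℓ : ℝ) + ((∑ i, α i : ℕ) : ℝ) / 2)) := by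
  set A : ℕ := ∑ i, α i with hA
  refine ⟨(1 / 2) ^ (2 * ℓ + A) * Real.exp (-(4 * π ^ 2 * n)), by positivity, 1, one_pos, ?_⟩
  intro t ht ht1
  set s : ℝ := t ^ (-(1 / 2) : ℝ) with hs
  have hs1 : 1 ≤ s := Real.one_le_rpow_of_pos_of_le_one_of_nonpos ht ht1 (by norm_num)
  have hs2 : s ^ 2 * t = 1 := by
    rw [hs, ← Real.rpow_natCast, ← Real.rpow_mul ht.le]
    norm_num
    rw [Real.rpow_neg_one, inv_mul_cancel₀ ht.ne']
  have hspow : t ^ (-((ℓ : ℝ) + (A : ℝ) / 2)) = s ^ (2 * ℓ + A) := by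
    rw [hs, ← Real.rpow_natCast, ← Real.rpow_mul ht.le]
    congr 1
    push_cast
    ring
  have hk1 : (1 : ℝ) ≤ (⌊s⌋ : ℝ) := by
    exact_mod_cast Int.le_floor.mpr (by exact_mod_cast hs1)
  refine ⟨fun _ => ⌊s⌋, ?_⟩
  have hks : (⌊s⌋ : ℝ) ≤ s := Int.floor_le s
  have hsk : s / 2 ≤ (⌊s⌋ : ℝ) := by linarith [Int.lt_floor_add_one s]
  beta_reduce
  generalize (⌊s⌋ : ℝ) = k at hk1 hks hsk ⊢
  have hk0 : 0 < k := by linarith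
  have hn' : (1 : ℝ) ≤ n := by exact_mod_cast hn
  have hpi := Real.pi_gt_three
  rw [Finset.prod_pow_eq_pow_sum, ← hA, abs_of_pos (pow_pos hk0 A), Finset.sum_const,
    Finset.card_univ, Fintype.card_fin, nsmul_eq_mul, hspow, ge_iff_le]
  have hexp : Real.exp (-(4 * π ^ 2 * n)) ≤ Real.exp (-(4 * π ^ 2 * (n * k ^ 2)) * t) := by
    rw [Real.exp_le_exp]
    have hkt : k ^ 2 * t ≤ 1 := by
      rw [← hs2]
      gcongr
    have := mul_le_mul_of_nonneg_left hkt (show 0 ≤ 4 * π ^ 2 * (n : ℝ) by positivity)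
    linarith
  have hA1 : 1 ≤ (2 * π) ^ A := one_le_pow₀ (by linarith)
  have hL : (k ^ 2) ^ ℓ ≤ (4 * π ^ 2 * (n * k ^ 2)) ^ ℓ := by
    apply pow_le_pow_left₀ (by positivity)
    have hC : 1 ≤ 4 * π ^ 2 * (n : ℝ) := one_le_mul_of_one_le_of_one_le (by nlinarith) hn'
    have := mul_le_mul_of_nonneg_right hC (sq_nonneg k)
    linarith
  calc (1 / 2) ^ (2 * ℓ + A) * Real.exp (-(4 * π ^ 2 * n)) * s ^ (2 * ℓ + A)
      = (s / 2) ^ (2 * ℓ + A) * Real.exp (-(4 * π ^ 2 * n)) := by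
        rw [div_eq_mul_one_div s 2, mul_pow]
        ring
    _ ≤ k ^ (2 * ℓ + A) * Real.exp (-(4 * π ^ 2 * n)) := by gcongr
    _ = 1 * (k ^ 2) ^ ℓ * k ^ A * Real.exp (-(4 * π ^ 2 * n)) := by
        rw [pow_add, pow_mul]
        ring
    _ ≤ _ := by gcongr
end

section
/- Let n ≥ 1 and let k ∈ ℕ satisfy k > n/2. Then there exists a constant A > 0 (depending only on k and n) such that for every function ω : ℤ^n × ℤ^n → ℂ with |ω(r,s)| = 1 for all r, s ∈ ℤ^n, and all a, b : ℤ^n → ℂ with ‖a‖_{h^k} < ∞ and ‖b‖_{h^k} < ∞, the twisted convolution c(m) = Σ_{r∈ℤ^n} ω(r, m−r) a(r) b(m−r) converges absolutely for every m ∈ ℤ^n, and ‖c‖_{h^k} ≤ A · ‖a‖_{h^k} · ‖b‖_{h^k}. (This is the Fourier-coefficient form of the Banach algebra property of the Sobolev space H^k_θ on the noncommutative torus: the product ab has Fourier coefficients given by the twisted convolution of the coefficients of a and b with a unimodular twisting factor ω_θ.) -/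
/-!
Write `W m = (1 + 4π²‖m‖²)^k` for the Sobolev weight. Since `2k > n`, the series `∑ 1 / W m`
over `ℤⁿ` converges, to `S` say (`summable_inv_sobolevWeight`), and since
`‖r + s‖² ≤ 2(‖r‖² + ‖s‖²)`, the weight is quasi-subadditive: `W (r + s) ≤ 4^k (W r + W s)`
(`sobolevWeight_add_le`).

Dividing the latter by `W r * W s` shows that
`∑ r, W m / (W r * W (m - r)) ≤ 2 * 4^k * S`, uniformly in `m`. The Cauchy–Schwarz inequality,
applied to `‖a r‖ ‖b (m - r)‖` after splitting off the factor `1 / √(W r * W (m - r))`, then gives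
`W m * ‖c m‖² ≤ 2 * 4^k * S * ∑ r, (W r * ‖a r‖²) * (W (m - r) * ‖b (m - r)‖²)`.
The right-hand side is the convolution of two summable nonnegative families, so its sum over `m` is
the product of the two sums. The unimodular factor disappears on taking norms.
-/

open Real

/-- The squared weighted ℓ² (Sobolev `h^k`) sum of a family of Fourier
coefficients `a : ℤⁿ → ℂ`. -/
noncomputable def wsumSq (n k : ℕ) (a : (Fin n → ℤ) → ℂ) : ℝ :=
  ∑' m : Fin n → ℤ, (1 + 4 * π ^ 2 * ∑ i, ((m i : ℝ)) ^ 2) ^ k * ‖a m‖ ^ 2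

/-- Summability of the weighted ℓ² sum, i.e. membership in `h^k`. -/
def WSummable (n k : ℕ) (a : (Fin n → ℤ) → ℂ) : Prop :=
  Summable (fun m : Fin n → ℤ =>
    (1 + 4 * π ^ 2 * ∑ i, ((m i : ℝ)) ^ 2) ^ k * ‖a m‖ ^ 2)

/-- The weight `(1 + 4π²‖m‖²)^k` of the norm of `h^k`. -/
noncomputable def sobolevWeight (n k : ℕ) (m : Fin n → ℤ) : ℝ :=
  (1 + 4 * π ^ 2 * ∑ i, ((m i : ℝ)) ^ 2) ^ k

lemma sobolevWeight_pos (n k : ℕ) (m : Fin n → ℤ) : 0 < sobolevWeight n k m := by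
  unfold sobolevWeight
  positivity

lemma sobolevWeight_add_le (n k : ℕ) (r s : Fin n → ℤ) :
    sobolevWeight n k (r + s) ≤ 4 ^ k * (sobolevWeight n k r + sobolevWeight n k s) := by
  unfold sobolevWeight
  set x := 1 + 4 * π ^ 2 * ∑ i, ((r i : ℝ)) ^ 2 with hx
  set y := 1 + 4 * π ^ 2 * ∑ i, ((s i : ℝ)) ^ 2 with hy
  have hx0 : 0 ≤ x := by positivity
  have hy0 : 0 ≤ y := by positivity
  have hsum : ∑ i, (((r + s) i : ℤ) : ℝ) ^ 2
      ≤ 2 * (∑ i, ((r i : ℝ)) ^ 2 + ∑ i, ((s i : ℝ)) ^ 2) := by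
    rw [← Finset.sum_add_distrib, Finset.mul_sum]
    refine Finset.sum_le_sum fun i _ => ?_
    simp only [Pi.add_apply, Int.cast_add]
    nlinarith [sq_nonneg ((r i : ℝ) - s i)]
  have h1 : 1 + 4 * π ^ 2 * ∑ i, (((r + s) i : ℤ) : ℝ) ^ 2 ≤ 2 * (x + y) := by
    have := mul_le_mul_of_nonneg_left hsum (by positivity : (0 : ℝ) ≤ 4 * π ^ 2)
    rw [hx, hy]
    linarith
  have h2 : 2 * (x + y) ≤ 4 * max x y := by
    linarith [le_max_left x y, le_max_right x y]
  calc _ ≤ (4 * max x y) ^ k := pow_le_pow_left₀ (by positivity) (h1.trans h2) k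
    _ = 4 ^ k * (max x y) ^ k := mul_pow _ _ _
    _ ≤ 4 ^ k * (x ^ k + y ^ k) := by
      gcongr
      rcases max_choice x y with h | h <;> rw [h]
      · linarith [pow_nonneg hy0 k]
      · linarith [pow_nonneg hx0 k]

/-- Comparison with the lattice sum `∑ ‖z‖⁻²ᵏ` over the image of `ℤⁿ` in `ℝⁿ`, where `ℝⁿ` carries
the sup norm. -/
lemma summable_inv_sobolevWeight (n k : ℕ) (hk : n < 2 * k) :
    Summable fun m : Fin n → ℤ => (sobolevWeight n k m)⁻¹ := by
  let L : Submodule ℤ (Fin n → ℝ) := Submodule.span ℤ (Set.range (Pi.basisFun ℝ (Fin n)))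
  have hmem : ∀ m : Fin n → ℤ, (fun i => (m i : ℝ)) ∈ L := fun m => by
    rw [(Pi.basisFun ℝ (Fin n)).mem_span_iff_repr_mem ℤ]
    intro i
    exact ⟨m i, by simp⟩
  let e : (Fin n → ℤ) → L := fun m => ⟨fun i => (m i : ℝ), hmem m⟩
  have he : Function.Injective e := fun a b hab => by
    funext i
    have := congrFun (congrArg Subtype.val hab) i
    simpa [e] using this
  have hrank : Module.finrank ℤ L = n := by
    rw [ZLattice.rank ℝ L]
    simp
  have hsum : Summable fun m => ‖e m‖⁻¹ ^ (2 * k) :=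
    (ZLattice.summable_norm_pow_inv L (2 * k) (by rw [hrank]; exact hk)).comp_injective he
  refine hsum.of_norm_bounded_eventually ?_
  -- At `m = 0` the comparison fails, because the junk value of `‖0‖⁻¹` is `0`.
  filter_upwards [(Set.finite_singleton (0 : Fin n → ℤ)).compl_mem_cofinite] with m hm
  have hm0 : e m ≠ 0 := fun h => hm (he (h.trans (by ext; simp [e])))
  have hpos : 0 < ‖e m‖ := norm_pos_iff.mpr hm0
  rw [norm_inv, Real.norm_of_nonneg (sobolevWeight_pos n k m).le, inv_pow]
  apply inv_anti₀ (by positivity)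
  unfold sobolevWeight
  rw [pow_mul]
  apply pow_le_pow_left₀ (by positivity)
  have hle : ‖e m‖ ≤ √(∑ i, ((m i : ℝ)) ^ 2) := by
    refine (pi_norm_le_iff_of_nonneg (Real.sqrt_nonneg _)).mpr fun i => ?_
    apply Real.le_sqrt_of_sq_le
    rw [Real.norm_eq_abs, sq_abs]
    exact Finset.single_le_sum (f := fun i => ((m i : ℝ)) ^ 2) (fun _ _ => sq_nonneg _)
      (Finset.mem_univ i)
  have h1 : ‖e m‖ ^ 2 ≤ ∑ i, ((m i : ℝ)) ^ 2 := by
    have := pow_le_pow_left₀ hpos.le hle 2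
    rwa [Real.sq_sqrt (by positivity)] at this
  have h2 : (1 : ℝ) ≤ 4 * π ^ 2 := by nlinarith [Real.pi_gt_three]
  have h3 : (0 : ℝ) ≤ ∑ i, ((m i : ℝ)) ^ 2 := by positivity
  nlinarith

/-- The uniform bound `W (r + s) / (W r * W s) ≤ 4^k (1 / W r + 1 / W s)`. -/
lemma sobolevWeight_add_mul_inv_le (n k : ℕ) (r s : Fin n → ℤ) :
    sobolevWeight n k (r + s) * ((sobolevWeight n k r)⁻¹ * (sobolevWeight n k s)⁻¹)
      ≤ 4 ^ k * ((sobolevWeight n k r)⁻¹ + (sobolevWeight n k s)⁻¹) := by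
  have hr := sobolevWeight_pos n k r
  have hs := sobolevWeight_pos n k s
  calc _ ≤ 4 ^ k * (sobolevWeight n k r + sobolevWeight n k s) *
        ((sobolevWeight n k r)⁻¹ * (sobolevWeight n k s)⁻¹) := by
        gcongr
        exact sobolevWeight_add_le n k r s
    _ = _ := by
        field_simp
        ring

/-- Cauchy–Schwarz for series of nonnegative terms, in a form free of square roots: a family `h`
with `h² = f g` for summable `f` and `g`. -/
lemma summable_and_tsum_sq_le {ι : Type*} {f g h : ι → ℝ} (hf0 : ∀ i, 0 ≤ f i)
    (hg0 : ∀ i, 0 ≤ g i) (hh0 : ∀ i, 0 ≤ h i) (hfg : ∀ i, h i ^ 2 = f i * g i)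
    (hf : Summable f) (hg : Summable g) :
    Summable h ∧ (∑' i, h i) ^ 2 ≤ (∑' i, f i) * ∑' i, g i := by
  have hh : Summable h := by
    refine Summable.of_nonneg_of_le hh0 (fun i => ?_) (hf.add hg)
    apply abs_le_of_sq_le_sq' _ (add_nonneg (hf0 i) (hg0 i)) |>.2
    rw [hfg]
    nlinarith [hf0 i, hg0 i, mul_nonneg (hf0 i) (hg0 i)]
  refine ⟨hh, ?_⟩
  refine le_of_tendsto (hh.hasSum.pow 2) (Filter.Eventually.of_forall fun s => ?_)
  refine (Finset.sum_sq_le_sum_mul_sum_of_sq_le_mul s (fun i _ => hf0 i) (fun i _ => hg0 i)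
    (fun i _ => (hfg i).le)).trans ?_
  exact mul_le_mul (hf.sum_le_tsum s fun i _ => hf0 i) (hg.sum_le_tsum s fun i _ => hg0 i)
    (Finset.sum_nonneg fun i _ => hg0 i) (tsum_nonneg hf0)

/-- The convolution of two summable nonnegative families on an additive group is summable, and its
sum is the product of the sums. -/
lemma summable_conv {G : Type*} [AddCommGroup G] {f g : G → ℝ} (hf0 : ∀ i, 0 ≤ f i)
    (hg0 : ∀ i, 0 ≤ g i) (hf : Summable f) (hg : Summable g) :
    (∀ m, Summable fun r => f r * g (m - r)) ∧
    HasSum (fun m => ∑' r, f r * g (m - r)) ((∑' r, f r) * ∑' r, g r) := by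
  have hp : Summable fun p : G × G => f p.1 * g p.2 := hf.mul_of_nonneg hg hf0 hg0
  let e : G × G ≃ G × G :=
    { toFun := fun p => (p.2, p.1 - p.2)
      invFun := fun p => (p.1 + p.2, p.1)
      left_inv := fun p => by simp
      right_inv := fun p => by simp }
  have hq : Summable fun p : G × G => f p.2 * g (p.1 - p.2) := e.summable_iff.mpr hp
  refine ⟨fun m => hq.prod_factor m, ?_⟩
  have htot : ∑' p : G × G, f p.2 * g (p.1 - p.2) = (∑' r, f r) * ∑' r, g r := by
    rw [hf.tsum_mul_tsum hg hp]
    exact e.tsum_eq fun p : G × G => f p.1 * g p.2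
  rw [← htot, hq.tsum_prod]
  exact hq.prod.hasSum

/-- Proposition 4.2 (Fourier-coefficient form of the Banach algebra property
of `H^k_θ` for `k > n/2`): the twisted convolution of two `h^k` families with a
unimodular twisting factor converges absolutely and lies in `h^k`, with norm
bound `A ‖a‖_{h^k} ‖b‖_{h^k}`. -/
theorem stmt_10 (n : ℕ) (hn : 1 ≤ n) (k : ℕ) (hk : (n : ℝ) / 2 < k) :
    ∃ A > 0, ∀ ω : (Fin n → ℤ) → (Fin n → ℤ) → ℂ,
      (∀ r s : Fin n → ℤ, ‖ω r s‖ = 1) →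
      ∀ a b : (Fin n → ℤ) → ℂ, WSummable n k a → WSummable n k b →
        (∀ m : Fin n → ℤ,
          Summable (fun r : Fin n → ℤ => ‖ω r (m - r) * a r * b (m - r)‖)) ∧
        WSummable n k
          (fun m : Fin n → ℤ => ∑' r : Fin n → ℤ, ω r (m - r) * a r * b (m - r)) ∧
        Real.sqrt (wsumSq n k
            (fun m : Fin n → ℤ => ∑' r : Fin n → ℤ, ω r (m - r) * a r * b (m - r)))
          ≤ A * Real.sqrt (wsumSq n k a) * Real.sqrt (wsumSq n k b) := by
  have hk' : n < 2 * k := by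
    have : (n : ℝ) < 2 * k := by linarith
    exact_mod_cast this
  let W := sobolevWeight n k
  have hWpos : ∀ m, 0 < W m := sobolevWeight_pos n k
  have hWinv : Summable fun m => (W m)⁻¹ := summable_inv_sobolevWeight n k hk'
  let S := ∑' m, (W m)⁻¹
  have hS : 0 < S := hWinv.tsum_pos (fun m => (inv_pos.mpr (hWpos m)).le) 0 (inv_pos.mpr (hWpos 0))
  have hK : 0 < 4 ^ k * (S + S) := by positivity
  refine ⟨√(4 ^ k * (S + S)), Real.sqrt_pos.mpr hK, fun ω hω a b ha hb => ?_⟩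
  let f := fun m => W m * ‖a m‖ ^ 2
  let g := fun m => W m * ‖b m‖ ^ 2
  have hf0 : ∀ m, 0 ≤ f m := fun m => mul_nonneg (hWpos m).le (sq_nonneg _)
  have hg0 : ∀ m, 0 ≤ g m := fun m => mul_nonneg (hWpos m).le (sq_nonneg _)
  obtain ⟨hconv, hconvsum⟩ := summable_conv hf0 hg0 ha hb
  have hnorm : ∀ m r, ‖ω r (m - r) * a r * b (m - r)‖ = ‖a r‖ * ‖b (m - r)‖ := fun m r => by
    simp [hω]
  have hWm : ∀ m, Summable fun r => (W (m - r))⁻¹ := fun m =>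
    (Equiv.subLeft m).summable_iff.mpr hWinv
  have hinv0 : ∀ m r, 0 ≤ (W r)⁻¹ * (W (m - r))⁻¹ := fun m r =>
    mul_nonneg (inv_pos.mpr (hWpos _)).le (inv_pos.mpr (hWpos _)).le
  have hinv : ∀ m, Summable fun r => (W r)⁻¹ * (W (m - r))⁻¹ :=
    (summable_conv (fun m => (inv_pos.mpr (hWpos m)).le) (fun m => (inv_pos.mpr (hWpos m)).le)
      hWinv hWinv).1
  have hbound : ∀ m, W m * ∑' r, (W r)⁻¹ * (W (m - r))⁻¹ ≤ 4 ^ k * (S + S) := fun m => by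
    have hS' : ∑' r, (W (m - r))⁻¹ = S := (Equiv.subLeft m).tsum_eq fun r => (W r)⁻¹
    rw [← tsum_mul_left]
    calc _ ≤ ∑' r, 4 ^ k * ((W r)⁻¹ + (W (m - r))⁻¹) := by
          refine ((hinv m).mul_left _).tsum_le_tsum (fun r => ?_)
            ((hWinv.add (hWm m)).mul_left _)
          have := sobolevWeight_add_mul_inv_le n k r (m - r)
          rwa [add_sub_cancel] at this
      _ = _ := by rw [tsum_mul_left, hWinv.tsum_add (hWm m), hS']
  have hCS := fun m => summable_and_tsum_sq_le
    (f := fun r => f r * g (m - r)) (g := fun r => (W r)⁻¹ * (W (m - r))⁻¹)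
    (h := fun r => ‖a r‖ * ‖b (m - r)‖)
    (fun r => mul_nonneg (hf0 _) (hg0 _)) (hinv0 m) (fun r => by positivity)
    (fun r => by
      have h1 := (hWpos r).ne'
      have h2 := (hWpos (m - r)).ne'
      simp only [f, g]
      field_simp) (hconv m) (hinv m)
  have hsum : ∀ m, Summable fun r => ‖ω r (m - r) * a r * b (m - r)‖ := fun m => by
    simpa only [hnorm] using (hCS m).1
  have hpt : ∀ m, W m * ‖∑' r, ω r (m - r) * a r * b (m - r)‖ ^ 2
      ≤ 4 ^ k * (S + S) * ∑' r, f r * g (m - r) := fun m => by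
    have hc : ‖∑' r, ω r (m - r) * a r * b (m - r)‖ ≤ ∑' r, ‖a r‖ * ‖b (m - r)‖ := by
      simpa only [hnorm] using norm_tsum_le_tsum_norm (hsum m)
    have hT : 0 ≤ ∑' r, f r * g (m - r) := tsum_nonneg fun r => mul_nonneg (hf0 _) (hg0 _)
    calc _ ≤ W m * ((∑' r, f r * g (m - r)) * ∑' r, (W r)⁻¹ * (W (m - r))⁻¹) :=
          mul_le_mul_of_nonneg_left ((pow_le_pow_left₀ (norm_nonneg _) hc 2).trans (hCS m).2)
            (hWpos m).le
      _ = (W m * ∑' r, (W r)⁻¹ * (W (m - r))⁻¹) * ∑' r, f r * g (m - r) := by ring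
      _ ≤ _ := mul_le_mul_of_nonneg_right (hbound m) hT
  have hmaj := hconvsum.mul_left (4 ^ k * (S + S))
  have hws : Summable fun m => W m * ‖∑' r, ω r (m - r) * a r * b (m - r)‖ ^ 2 :=
    Summable.of_nonneg_of_le (fun m => mul_nonneg (hWpos m).le (sq_nonneg _)) hpt hmaj.summable
  refine ⟨hsum, hws, ?_⟩
  have hfin : wsumSq n k (fun m => ∑' r, ω r (m - r) * a r * b (m - r))
      ≤ 4 ^ k * (S + S) * (wsumSq n k a * wsumSq n k b) :=
    hasSum_le hpt hws.hasSum hmaj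
  have ha0 : 0 ≤ wsumSq n k a := tsum_nonneg hf0
  rw [mul_assoc, ← Real.sqrt_mul ha0, ← Real.sqrt_mul hK.le]
  exact Real.sqrt_le_sqrt hfin
end
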